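/- Let O ⊆ ℝ^d be a bounded, connected, open set whose boundary is of class C², let p be a real number with p ≥ 2, and let λ > 0. Suppose u₁ and u₂ are real-valued functions, each continuous on the closure of O and twice continuously differentiable on O, and each u = u_i satisfies: Δu(x) − u(x)^{p−1} + λ u(x) = 0 for all x ∈ O; u(x) > 0 for all x ∈ O; u(x) = 0 for all x ∈ ∂O; and ∫_O u(x)² dx = 1. Then u₁ = u₂ on the closure of O. -/

import Mathlib

open MeasureTheory

/-- The Laplacian `Δu(x) = ∑ i, ∂²u/∂x_i²(x)` as the sum of second partial derivatives. -/
noncomputable def lap {d : ℕ} (u : EuclideanSpace ℝ (Fin d) → ℝ)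
    (x : EuclideanSpace ℝ (Fin d)) : ℝ :=
  ∑ i : Fin d, fderiv ℝ (fun y => fderiv ℝ u y (EuclideanSpace.single i (1 : ℝ))) x
    (EuclideanSpace.single i (1 : ℝ))

/-- An open set `O` has boundary of class `C²`: near each boundary point there is a `C²`
defining function with nonvanishing differential whose zero set is the boundary and
whose negativity set is `O` (a standard formulation of a `C²` boundary, equivalent to
the local flattening by a `C²` diffeomorphism). -/
def IsC2Boundary {d : ℕ} (O : Set (EuclideanSpace ℝ (Fin d))) : Prop :=
  ∀ x ∈ frontier O, ∃ U : Set (EuclideanSpace ℝ (Fin d)), IsOpen U ∧ x ∈ U ∧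
    ∃ ρ : EuclideanSpace ℝ (Fin d) → ℝ,
      ContDiffOn ℝ 2 ρ U ∧ (∀ y ∈ U, fderiv ℝ ρ y ≠ 0) ∧
      (∀ y ∈ U, (y ∈ O ↔ ρ y < 0)) ∧ (∀ y ∈ U, (y ∈ frontier O ↔ ρ y = 0))

/-!
Let `k` be a nondecreasing `C¹` function that vanishes on `(-∞, 1]` and takes values in
`(0, 1]` beyond. For two positive solutions `u` and `v` of `Δw = f w`, the divergence of the
field `k (u / v) (v ∇u - u ∇v)` is
`k' (u / v) |v ∇u - u ∇v|² / v² + k (u / v) (v Δu - u Δv)`.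
The second term is nonnegative: it vanishes where `u ≤ v`, and where `u > v` the monotonicity of
`f s / s` gives `u Δv ≤ v Δu`. If the field had compact support in `O`, integration would force
the first term to vanish, so that `k (u / v)` is constant on the connected set `O`. Compact
support is obtained by replacing `v` with `v + ε`, which exceeds `u` near the boundary; this
changes `v Δu - u Δv` only by `ε Δu`, which is bounded below by a multiple of `ε`, and Fatou's
lemma handles `ε → 0`. Hence either `u ≤ v` throughout `O` or `u > v` throughout `O`, and
equality of the masses excludes the second case. Exchanging `u` and `v` gives equality.
-/

open Set Filter Topology

section VanishingIntegrals

theorem eqOn_zero_of_tendsto_setIntegral_zero {X : Type*} [TopologicalSpace X]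
    [MeasurableSpace X] [OpensMeasurableSpace X] {μ : Measure X} [μ.IsOpenPosMeasure]
    {O : Set X} (hO : IsOpen O) {F : ℕ → X → ℝ} {f : X → ℝ} (hf : ContinuousOn f O)
    (hF_nonneg : ∀ n, ∀ x ∈ O, 0 ≤ F n x) (hF_int : ∀ n, IntegrableOn (F n) O μ)
    (hF_lim : ∀ x ∈ O, Tendsto (fun n => F n x) atTop (𝓝 (f x)))
    (h_lim : Tendsto (fun n => ∫ x in O, F n x ∂μ) atTop (𝓝 0)) :
    EqOn f 0 O := by
  have hf_nonneg : ∀ x ∈ O, 0 ≤ f x := fun x hx =>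
    ge_of_tendsto' (hF_lim x hx) fun n => hF_nonneg n x hx
  have h_lintegral_lim : Tendsto (fun n => ∫⁻ x in O, ENNReal.ofReal (F n x) ∂μ) atTop (𝓝 0) := by
    have h := ENNReal.tendsto_ofReal h_lim
    rw [ENNReal.ofReal_zero] at h
    exact h.congr fun n => ofReal_integral_eq_lintegral_ofReal (hF_int n)
      (ae_restrict_of_forall_mem hO.measurableSet (hF_nonneg n))
  have h_lintegral : ∫⁻ x in O, ENNReal.ofReal (f x) ∂μ = 0 := by
    refine le_antisymm ?_ zero_le
    calc ∫⁻ x in O, ENNReal.ofReal (f x) ∂μ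
        = ∫⁻ x in O, liminf (fun n => ENNReal.ofReal (F n x)) atTop ∂μ :=
          setLIntegral_congr_fun hO.measurableSet fun x hx =>
            (ENNReal.tendsto_ofReal (hF_lim x hx)).liminf_eq.symm
      _ ≤ liminf (fun n => ∫⁻ x in O, ENNReal.ofReal (F n x) ∂μ) atTop :=
          lintegral_liminf_le' fun n => (hF_int n).aemeasurable.ennreal_ofReal
      _ = 0 := h_lintegral_lim.liminf_eq
  rw [lintegral_eq_zero_iff' (hf.aemeasurable hO.measurableSet).ennreal_ofReal] at h_lintegral
  refine Measure.eqOn_open_of_ae_eq (μ := μ) ?_ hO hf continuousOn_const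
  filter_upwards [h_lintegral, ae_restrict_mem hO.measurableSet] with x hx hxO
  exact le_antisymm (ENNReal.ofReal_eq_zero.mp hx) (hf_nonneg x hxO)

theorem contDiff_indicator_of_eq_zero_off_isClosed {E F : Type*} [NormedAddCommGroup E]
    [NormedSpace ℝ E] [NormedAddCommGroup F] [NormedSpace ℝ F] {n : WithTop ℕ∞} {O K : Set E}
    (hO : IsOpen O) (hK : IsClosed K) (hKO : K ⊆ O) {f : E → F} (hf : ContDiffOn ℝ n f O)
    (hfK : ∀ x ∈ O \ K, f x = 0) :
    ContDiff ℝ n (O.indicator f) := by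
  refine contDiff_iff_contDiffAt.mpr fun x => ?_
  by_cases hx : x ∈ O
  · exact (hf.contDiffAt (hO.mem_nhds hx)).congr_of_eventuallyEq
      (eqOn_indicator.eventuallyEq_of_mem (hO.mem_nhds hx))
  · refine contDiffAt_const (c := (0 : F)) |>.congr_of_eventuallyEq ?_
    filter_upwards [hK.isOpen_compl.mem_nhds fun hxK => hx (hKO hxK)] with y hyK
    exact indicator_apply_eq_zero.mpr fun hyO => hfK y ⟨hyO, hyK⟩

variable {E : Type*} [NormedAddCommGroup E] [NormedSpace ℝ E] [MeasurableSpace E]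

theorem integrable_fderiv_apply_of_hasCompactSupport [OpensMeasurableSpace E] {μ : Measure E}
    [IsFiniteMeasureOnCompacts μ] {g : E → ℝ} (hg : ContDiff ℝ 1 g)
    (hg_supp : HasCompactSupport g) (e : E) :
    Integrable (fun x => fderiv ℝ g x e) μ :=
  ((hg.continuous_fderiv one_ne_zero).clm_apply continuous_const).integrable_of_hasCompactSupport
    (hg_supp.fderiv_apply (𝕜 := ℝ) e)

variable [FiniteDimensional ℝ E] [BorelSpace E] {μ : Measure E} [μ.IsAddHaarMeasure]

theorem integral_fderiv_apply_of_hasCompactSupport {g : E → ℝ} (hg : ContDiff ℝ 1 g)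
    (hg_supp : HasCompactSupport g) (e : E) :
    ∫ x, fderiv ℝ g x e ∂μ = 0 := by
  have hg_int : Integrable g μ := hg.continuous.integrable_of_hasCompactSupport hg_supp
  simpa using integral_mul_fderiv_eq_neg_fderiv_mul_of_integrable (μ := μ)
    (f := fun _ : E => (1 : ℝ)) (g := g) (v := e) (by simp)
    (by simpa using integrable_fderiv_apply_of_hasCompactSupport hg hg_supp e)
    (by simpa using hg_int) (by simp) (fun x _ => hg.differentiable one_ne_zero x)

theorem setIntegral_fderiv_apply_eq_zero {O K : Set E} (hO : IsOpen O) (hK : IsCompact K)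
    (hKO : K ⊆ O) {f : E → ℝ} (hf : ContDiffOn ℝ 1 f O) (hfK : ∀ x ∈ O \ K, f x = 0) (e : E) :
    IntegrableOn (fun x => fderiv ℝ f x e) O μ ∧ ∫ x in O, fderiv ℝ f x e ∂μ = 0 := by
  set g := O.indicator f
  have hg : ContDiff ℝ 1 g :=
    contDiff_indicator_of_eq_zero_off_isClosed hO hK.isClosed hKO hf hfK
  have hg_zero : ∀ x ∉ K, g x = 0 := fun x hxK =>
    indicator_apply_eq_zero.mpr fun hxO => hfK x ⟨hxO, hxK⟩
  have hg_supp : HasCompactSupport g := HasCompactSupport.intro hK hg_zero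
  have h_eq : EqOn (fun x => fderiv ℝ g x e) (fun x => fderiv ℝ f x e) O := fun x hx =>
    congrArg (fun L : E →L[ℝ] ℝ => L e)
      (eqOn_indicator.eventuallyEq_of_mem (hO.mem_nhds hx)).fderiv_eq
  have h_off : ∀ x ∉ O, fderiv ℝ g x e = 0 := fun x hx => by
    have hxg : x ∉ tsupport g := fun h =>
      hx (hKO (closure_minimal (Function.support_subset_iff'.mpr hg_zero) hK.isClosed h))
    rw [image_eq_zero_of_notMem_tsupport fun h => hxg (tsupport_fderiv_subset ℝ h), zero_apply]
  refine ⟨(integrable_fderiv_apply_of_hasCompactSupport hg hg_supp e).integrableOn.congr_fun h_eq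
    hO.measurableSet, ?_⟩
  rw [← setIntegral_congr_fun hO.measurableSet h_eq,
    setIntegral_eq_integral_of_forall_compl_eq_zero h_off,
    integral_fderiv_apply_of_hasCompactSupport hg hg_supp]

end VanishingIntegrals

section Wronskian

variable {E : Type*} [NormedAddCommGroup E] [NormedSpace ℝ E] {u v : E → ℝ} {x : E}

/-- The Wronskian `v ∇u - u ∇v`, encoded as a field of linear functionals; it is
`v² ∇(u / v)` where `v ≠ 0`. -/
noncomputable def wronskian (u v : E → ℝ) (x : E) : E →L[ℝ] ℝ :=
  v x • fderiv ℝ u x - u x • fderiv ℝ v x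

theorem hasFDerivAt_div_wronskian (hu : DifferentiableAt ℝ u x) (hv : DifferentiableAt ℝ v x)
    (hvx : v x ≠ 0) :
    HasFDerivAt (fun y => u y / v y) ((v x ^ 2)⁻¹ • wronskian u v x) x := by
  have h := hu.hasFDerivAt.fun_mul ((hasDerivAt_inv hvx).comp_hasFDerivAt x hv.hasFDerivAt)
  simp only [Function.comp_apply, ← div_eq_mul_inv] at h
  refine h.congr_fderiv (ContinuousLinearMap.ext fun y => ?_)
  simp only [wronskian, add_apply, sub_apply, smul_apply, smul_eq_mul]
  field_simp
  ring

theorem contDiffOn_wronskian {O : Set E} (hO : IsOpen O) (hu : ContDiffOn ℝ 2 u O)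
    (hv : ContDiffOn ℝ 2 v O) : ContDiffOn ℝ 1 (wronskian u v) O :=
  ((hv.of_le one_le_two).smul (hu.fderiv_of_isOpen hO (by norm_num))).sub
    ((hu.of_le one_le_two).smul (hv.fderiv_of_isOpen hO (by norm_num)))

theorem hasFDerivAt_wronskian_apply (hu : ContDiffAt ℝ 2 u x) (hv : ContDiffAt ℝ 2 v x) (e : E) :
    HasFDerivAt (fun y => wronskian u v y e)
      (v x • fderiv ℝ (fun y => fderiv ℝ u y e) x + fderiv ℝ u x e • fderiv ℝ v x -
        (u x • fderiv ℝ (fun y => fderiv ℝ v y e) x + fderiv ℝ v x e • fderiv ℝ u x)) x := by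
  have h_apply {f : E → ℝ} (hf : ContDiffAt ℝ 2 f x) :
      DifferentiableAt ℝ (fun y => fderiv ℝ f y e) x :=
    ((hf.fderiv_right (m := 1) (by norm_num)).differentiableAt one_ne_zero).clm_apply
      (differentiableAt_const e)
  have hu₁ := (hu.differentiableAt two_ne_zero).hasFDerivAt
  have hv₁ := (hv.differentiableAt two_ne_zero).hasFDerivAt
  exact (hv₁.fun_mul (h_apply hu).hasFDerivAt).fun_sub (hu₁.fun_mul (h_apply hv).hasFDerivAt)

theorem fderiv_comp_div_mul_wronskian_apply {k : ℝ → ℝ} (hk : DifferentiableAt ℝ k (u x / v x))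
    (hu : ContDiffAt ℝ 2 u x) (hv : ContDiffAt ℝ 2 v x) (hvx : v x ≠ 0) (e : E) :
    fderiv ℝ (fun y => k (u y / v y) * wronskian u v y e) x e =
      deriv k (u x / v x) * wronskian u v x e ^ 2 / v x ^ 2 +
        k (u x / v x) * (v x * fderiv ℝ (fun y => fderiv ℝ u y e) x e -
          u x * fderiv ℝ (fun y => fderiv ℝ v y e) x e) := by
  have h_ratio := hasFDerivAt_div_wronskian (hu.differentiableAt two_ne_zero)
    (hv.differentiableAt two_ne_zero) hvx
  have h : HasFDerivAt (fun y => k (u y / v y) * wronskian u v y e) _ x :=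
    (hk.hasDerivAt.comp_hasFDerivAt x h_ratio).fun_mul (hasFDerivAt_wronskian_apply hu hv e)
  rw [h.fderiv]
  simp only [Function.comp_apply, add_apply, sub_apply, smul_apply, smul_eq_mul]
  ring

end Wronskian

section Picone

variable {d : ℕ} {O : Set (EuclideanSpace ℝ (Fin d))} {k : ℝ → ℝ}
  {u v : EuclideanSpace ℝ (Fin d) → ℝ}

theorem lap_add_const (v : EuclideanSpace ℝ (Fin d) → ℝ) (c : ℝ) (x : EuclideanSpace ℝ (Fin d)) :
    lap (fun y => v y + c) x = lap v x := by
  simp only [lap, fderiv_add_const]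

/-- The density `k'(u / v) |v ∇u - u ∇v|² / v²` produced by testing the equations for `u` and `v`
with `v * k (u / v)` and `u * k (u / v)` respectively, as in Picone's identity. -/
noncomputable def piconeDensity (k : ℝ → ℝ) (u v : EuclideanSpace ℝ (Fin d) → ℝ)
    (x : EuclideanSpace ℝ (Fin d)) : ℝ :=
  deriv k (u x / v x) * ‖wronskian u v x‖ ^ 2 / v x ^ 2

theorem piconeDensity_nonneg (hk : Monotone k) (x : EuclideanSpace ℝ (Fin d)) :
    0 ≤ piconeDensity k u v x := by
  have := hk.deriv_nonneg (x := u x / v x)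
  unfold piconeDensity
  positivity

theorem continuousOn_piconeDensity (hO : IsOpen O) (hk : ContDiff ℝ 1 k)
    (hu : ContDiffOn ℝ 2 u O) (hv : ContDiffOn ℝ 2 v O) (hv_ne : ∀ x ∈ O, v x ≠ 0) :
    ContinuousOn (piconeDensity k u v) O :=
  (((hk.continuous_deriv le_rfl).comp_continuousOn
    (hu.continuousOn.div hv.continuousOn hv_ne)).mul
      ((contDiffOn_wronskian hO hu hv).continuousOn.norm.pow 2)).div
        (hv.continuousOn.pow 2) fun x hx => pow_ne_zero 2 (hv_ne x hx)

theorem tendsto_piconeDensity_add_const (hk : ContDiff ℝ 1 k) {x : EuclideanSpace ℝ (Fin d)}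
    (hvx : v x ≠ 0) :
    Tendsto (fun ε : ℝ => piconeDensity k u (fun y => v y + ε) x) (𝓝 0)
      (𝓝 (piconeDensity k u v x)) := by
  have hk' := hk.continuous_deriv le_rfl
  have h : ContinuousAt (fun ε : ℝ => deriv k (u x / (v x + ε)) *
      ‖(v x + ε) • fderiv ℝ u x - u x • fderiv ℝ v x‖ ^ 2 / (v x + ε) ^ 2) 0 := by
    have hv_add : ContinuousAt (fun ε : ℝ => v x + ε) 0 := by fun_prop
    have hvx' : v x + 0 ≠ 0 := by rwa [add_zero]
    exact ((hk'.continuousAt.comp (continuousAt_const.div hv_add hvx')).mul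
      (((hv_add.smul continuousAt_const).sub continuousAt_const).norm.pow 2)).div
        (hv_add.pow 2) (pow_ne_zero 2 hvx')
  simpa [piconeDensity, wronskian, fderiv_add_const, ContinuousAt] using h

theorem sum_fderiv_comp_div_mul_wronskian {x : EuclideanSpace ℝ (Fin d)}
    (hk : DifferentiableAt ℝ k (u x / v x)) (hu : ContDiffAt ℝ 2 u x) (hv : ContDiffAt ℝ 2 v x)
    (hvx : v x ≠ 0) :
    ∑ i, fderiv ℝ (fun y => k (u y / v y) * wronskian u v y (EuclideanSpace.single i 1)) x
        (EuclideanSpace.single i 1) =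
      piconeDensity k u v x + k (u x / v x) * (v x * lap u x - u x * lap v x) := by
  have h_norm := (EuclideanSpace.basisFun (Fin d) ℝ).norm_dual (wronskian u v x)
  simp only [EuclideanSpace.basisFun_apply] at h_norm
  simp only [fderiv_comp_div_mul_wronskian_apply hk hu hv hvx, piconeDensity, lap, h_norm,
    Finset.sum_add_distrib, Finset.sum_sub_distrib, ← Finset.mul_sum, ← Finset.sum_div]

theorem setIntegral_picone_eq_zero (hO : IsOpen O) {K : Set (EuclideanSpace ℝ (Fin d))}
    (hK : IsCompact K) (hKO : K ⊆ O) (hk : ContDiff ℝ 1 k) (hu : ContDiffOn ℝ 2 u O)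
    (hv : ContDiffOn ℝ 2 v O) (hv_ne : ∀ x ∈ O, v x ≠ 0)
    (hkK : ∀ x ∈ O \ K, k (u x / v x) = 0) :
    IntegrableOn
        (fun x => piconeDensity k u v x + k (u x / v x) * (v x * lap u x - u x * lap v x)) O ∧
      ∫ x in O, piconeDensity k u v x + k (u x / v x) * (v x * lap u x - u x * lap v x) = 0 := by
  set X : Fin d → EuclideanSpace ℝ (Fin d) → ℝ := fun i x =>
    k (u x / v x) * wronskian u v x (EuclideanSpace.single i 1)
  have hX (i : Fin d) : ContDiffOn ℝ 1 (X i) O :=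
    (hk.comp_contDiffOn ((hu.of_le one_le_two).div (hv.of_le one_le_two) hv_ne)).mul
      ((contDiffOn_wronskian hO hu hv).clm_apply contDiffOn_const)
  have hXK (i : Fin d) : ∀ x ∈ O \ K, X i x = 0 := fun x hx => by
    simp only [X, hkK x hx, zero_mul]
  have h_div (i : Fin d) := setIntegral_fderiv_apply_eq_zero (μ := volume) hO hK hKO (hX i)
    (hXK i) (EuclideanSpace.single i 1)
  have h_eq : EqOn (fun x => ∑ i, fderiv ℝ (X i) x (EuclideanSpace.single i 1))
      (fun x => piconeDensity k u v x + k (u x / v x) * (v x * lap u x - u x * lap v x)) O :=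
    fun x hx => sum_fderiv_comp_div_mul_wronskian (hk.differentiable one_ne_zero _)
      (hu.contDiffAt (hO.mem_nhds hx)) (hv.contDiffAt (hO.mem_nhds hx)) (hv_ne x hx)
  refine ⟨IntegrableOn.congr_fun (integrable_finsetSum _ fun i _ => (h_div i).1) h_eq
    hO.measurableSet, ?_⟩
  rw [← setIntegral_congr_fun hO.measurableSet h_eq, integral_finsetSum _ fun i _ => (h_div i).1]
  exact Finset.sum_eq_zero fun i _ => (h_div i).2

theorem setIntegral_piconeDensity_le (hO : IsOpen O) (hO_bdd : Bornology.IsBounded O)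
    (hk : ContDiff ℝ 1 k) (hk_mono : Monotone k) (hk_zero : ∀ s ≤ 1, k s = 0)
    (hk_le : ∀ s, k s ≤ 1) (hu_cont : ContinuousOn u (closure O)) (hu : ContDiffOn ℝ 2 u O)
    (hv_cont : ContinuousOn v (closure O)) (hv : ContDiffOn ℝ 2 v O)
    (hv_pos : ∀ x ∈ O, 0 < v x) (h_bd : ∀ x ∈ frontier O, u x < v x) {η : ℝ} (hη : 0 ≤ η)
    (h_lap : ∀ x ∈ O, v x < u x → -η ≤ v x * lap u x - u x * lap v x) :
    IntegrableOn (piconeDensity k u v) O ∧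
      ∫ x in O, piconeDensity k u v x ≤ η * volume.real O := by
  have hv_ne : ∀ x ∈ O, v x ≠ 0 := fun x hx => (hv_pos x hx).ne'
  set K := {x ∈ closure O | v x ≤ u x}
  have hK : IsCompact K := hO_bdd.isCompact_closure.of_isClosed_subset
    (isClosed_closure.isClosed_le hv_cont hu_cont) (sep_subset _ _)
  have hKO : K ⊆ O := fun x ⟨hx, hle⟩ => by
    by_contra hxO
    exact (h_bd x (hO.frontier_eq ▸ ⟨hx, hxO⟩)).not_ge hle
  have hkK : ∀ x ∈ O \ K, k (u x / v x) = 0 := fun x ⟨hx, hxK⟩ =>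
    hk_zero _ ((div_le_one (hv_pos x hx)).mpr
      (not_le.mp fun hle => hxK ⟨subset_closure hx, hle⟩).le)
  obtain ⟨h_int, h_zero⟩ := setIntegral_picone_eq_zero hO hK hKO hk hu hv hv_ne hkK
  have h_const : IntegrableOn (fun _ => η) O :=
    integrableOn_const hO_bdd.measure_lt_top.ne
  have h_le : ∀ x ∈ O, piconeDensity k u v x ≤
      piconeDensity k u v x + k (u x / v x) * (v x * lap u x - u x * lap v x) + η := by
    intro x hx
    rw [add_assoc, le_add_iff_nonneg_right]
    rcases le_or_gt (u x) (v x) with hle | hlt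
    · rwa [hk_zero _ ((div_le_one (hv_pos x hx)).mpr hle), zero_mul, zero_add]
    · have hk_nonneg : 0 ≤ k (u x / v x) :=
        (hk_zero 1 le_rfl).ge.trans (hk_mono ((one_lt_div (hv_pos x hx)).mpr hlt).le)
      nlinarith [h_lap x hx hlt, hk_le (u x / v x)]
  have h_density : IntegrableOn (piconeDensity k u v) O := by
    refine (h_int.add h_const).mono'
      ((continuousOn_piconeDensity hO hk hu hv hv_ne).aestronglyMeasurable hO.measurableSet)
      (ae_restrict_of_forall_mem hO.measurableSet fun x hx => ?_)
    rw [Real.norm_of_nonneg (piconeDensity_nonneg hk_mono x)]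
    exact h_le x hx
  refine ⟨h_density, ?_⟩
  calc ∫ x in O, piconeDensity k u v x
      ≤ ∫ x in O, piconeDensity k u v x + k (u x / v x) * (v x * lap u x - u x * lap v x) + η :=
        setIntegral_mono_on h_density (h_int.add h_const) hO.measurableSet h_le
    _ = η * volume.real O := by
        rw [integral_add h_int h_const, h_zero, setIntegral_const, zero_add, smul_eq_mul, mul_comm]

end Picone

section Comparison

variable {d : ℕ} {O : Set (EuclideanSpace ℝ (Fin d))} {u v : EuclideanSpace ℝ (Fin d) → ℝ}

theorem piconeDensity_eqOn_zero {k : ℝ → ℝ} (hO : IsOpen O) (hO_bdd : Bornology.IsBounded O)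
    (hk : ContDiff ℝ 1 k) (hk_mono : Monotone k) (hk_zero : ∀ s ≤ 1, k s = 0)
    (hk_le : ∀ s, k s ≤ 1) (hu_cont : ContinuousOn u (closure O)) (hu : ContDiffOn ℝ 2 u O)
    (hv_cont : ContinuousOn v (closure O)) (hv : ContDiffOn ℝ 2 v O)
    (hv_pos : ∀ x ∈ O, 0 < v x) (h_bd : ∀ x ∈ frontier O, u x ≤ v x)
    (h_bdd : BddBelow (lap u '' O))
    (h_lap : ∀ x ∈ O, v x < u x → u x * lap v x ≤ v x * lap u x) :
    EqOn (piconeDensity k u v) 0 O := by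
  obtain ⟨C, hC⟩ := h_bdd
  have hC_le : ∀ x ∈ O, -|C| ≤ lap u x := fun x hx =>
    (neg_abs_le C).trans (hC (mem_image_of_mem _ hx))
  set ε : ℕ → ℝ := fun n => 1 / ((n : ℝ) + 1)
  have hε_pos (n : ℕ) : 0 < ε n := Nat.one_div_pos_of_nat
  have hε_lim : Tendsto ε atTop (𝓝 0) := tendsto_one_div_add_atTop_nhds_zero_nat
  set F : ℕ → EuclideanSpace ℝ (Fin d) → ℝ := fun n => piconeDensity k u fun y => v y + ε n
  have hF (n : ℕ) :
      IntegrableOn (F n) O ∧ ∫ x in O, F n x ≤ ε n * |C| * volume.real O := by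
    refine setIntegral_piconeDensity_le (v := fun y => v y + ε n) hO hO_bdd hk hk_mono hk_zero
      hk_le hu_cont hu (hv_cont.add continuousOn_const) (hv.add contDiffOn_const)
      (fun x hx => add_pos (hv_pos x hx) (hε_pos n))
      (fun x hx => lt_add_of_le_of_pos (h_bd x hx) (hε_pos n))
      (mul_nonneg (hε_pos n).le (abs_nonneg C)) fun x hx hlt => ?_
    rw [lap_add_const]
    have h_cmp := h_lap x hx ((lt_add_of_pos_right _ (hε_pos n)).trans hlt)
    have h_shift := mul_le_mul_of_nonneg_left (hC_le x hx) (hε_pos n).le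
    linarith
  refine eqOn_zero_of_tendsto_setIntegral_zero (μ := volume) hO
    (continuousOn_piconeDensity hO hk hu hv fun x hx => (hv_pos x hx).ne')
    (fun n x _ => piconeDensity_nonneg hk_mono x) (fun n => (hF n).1)
    (fun x hx => (tendsto_piconeDensity_add_const hk (hv_pos x hx).ne').comp hε_lim) ?_
  refine squeeze_zero (fun n => integral_nonneg (piconeDensity_nonneg hk_mono))
    (fun n => (hF n).2) ?_
  simpa using (hε_lim.mul_const |C|).mul_const (volume.real O)

theorem hasFDerivAt_comp_div_zero_of_piconeDensity_eq_zero {k : ℝ → ℝ}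
    {x : EuclideanSpace ℝ (Fin d)} (hk : DifferentiableAt ℝ k (u x / v x))
    (hu : DifferentiableAt ℝ u x) (hv : DifferentiableAt ℝ v x) (hvx : v x ≠ 0)
    (h : piconeDensity k u v x = 0) :
    HasFDerivAt (fun y => k (u y / v y)) (0 : EuclideanSpace ℝ (Fin d) →L[ℝ] ℝ) x := by
  refine (hk.hasDerivAt.comp_hasFDerivAt x (hasFDerivAt_div_wronskian hu hv hvx)).congr_fderiv ?_
  have h' : deriv k (u x / v x) = 0 ∨ wronskian u v x = 0 := by
    simpa [piconeDensity, hvx] using h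
  rcases h' with h' | h' <;> simp [h']

theorem forall_le_or_forall_lt_of_mul_lap_le (hO : IsOpen O) (hO_bdd : Bornology.IsBounded O)
    (hO_conn : IsPreconnected O)
    (hu_cont : ContinuousOn u (closure O)) (hu : ContDiffOn ℝ 2 u O)
    (hv_cont : ContinuousOn v (closure O)) (hv : ContDiffOn ℝ 2 v O)
    (hv_pos : ∀ x ∈ O, 0 < v x) (h_bd : ∀ x ∈ frontier O, u x ≤ v x)
    (h_bdd : BddBelow (lap u '' O))
    (h_lap : ∀ x ∈ O, v x < u x → u x * lap v x ≤ v x * lap u x) :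
    (∀ x ∈ O, u x ≤ v x) ∨ ∀ x ∈ O, v x < u x := by
  set k : ℝ → ℝ := fun s => Real.smoothTransition (s - 1)
  have hk : ContDiff ℝ 1 k := Real.smoothTransition.contDiff.comp (contDiff_id.sub contDiff_const)
  have hk_mono : Monotone k := fun s t hst =>
    Real.smoothTransition.monotone (sub_le_sub_right hst 1)
  have hk_eq_zero (s : ℝ) : k s = 0 ↔ s ≤ 1 :=
    Real.smoothTransition.zero_iff_nonpos.trans sub_nonpos
  have h_density := piconeDensity_eqOn_zero hO hO_bdd hk hk_mono (fun s => (hk_eq_zero s).mpr)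
    (fun s => Real.smoothTransition.le_one _) hu_cont hu hv_cont hv hv_pos h_bd h_bdd h_lap
  have h_deriv : ∀ x ∈ O, HasFDerivAt (fun y => k (u y / v y)) 0 x := fun x hx =>
    hasFDerivAt_comp_div_zero_of_piconeDensity_eq_zero (hk.differentiable one_ne_zero _)
      ((hu.contDiffAt (hO.mem_nhds hx)).differentiableAt two_ne_zero)
      ((hv.contDiffAt (hO.mem_nhds hx)).differentiableAt two_ne_zero) (hv_pos x hx).ne'
      (h_density hx)
  obtain ⟨c, hc⟩ := hO.exists_is_const_of_fderiv_eq_zero hO_conn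
    (fun x hx => (h_deriv x hx).differentiableAt.differentiableWithinAt)
    fun x hx => (h_deriv x hx).fderiv
  have h_le_iff : ∀ x ∈ O, u x ≤ v x ↔ c = 0 := fun x hx => by
    rw [← hc x hx, hk_eq_zero, div_le_one (hv_pos x hx)]
  by_cases hc_zero : c = 0
  · exact .inl fun x hx => (h_le_iff x hx).mpr hc_zero
  · exact .inr fun x hx => not_le.mp fun hle => hc_zero ((h_le_iff x hx).mp hle)

theorem setIntegral_lt_setIntegral_of_forall_lt {X : Type*} [MeasurableSpace X] {μ : Measure X}
    {s : Set X} (hs : MeasurableSet s) (hμs : μ s ≠ 0) {f g : X → ℝ} (hf : IntegrableOn f s μ)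
    (hg : IntegrableOn g s μ) (h : ∀ x ∈ s, f x < g x) :
    ∫ x in s, f x ∂μ < ∫ x in s, g x ∂μ := by
  rw [← sub_pos, ← integral_sub hg hf, setIntegral_pos_iff_support_of_nonneg_ae
    (ae_restrict_of_forall_mem hs fun x hx => sub_nonneg.mpr (h x hx).le) (hg.sub hf)]
  exact hμs.bot_lt.trans_le (measure_mono fun x hx => ⟨(sub_pos.mpr (h x hx)).ne', hx⟩)

theorem le_of_mul_lap_le_of_setIntegral_sq_le (hO : IsOpen O) (hO_bdd : Bornology.IsBounded O)
    (hO_conn : IsPreconnected O)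
    (hu_cont : ContinuousOn u (closure O)) (hu : ContDiffOn ℝ 2 u O)
    (hv_cont : ContinuousOn v (closure O)) (hv : ContDiffOn ℝ 2 v O)
    (hv_pos : ∀ x ∈ O, 0 < v x) (h_bd : ∀ x ∈ frontier O, u x ≤ v x)
    (h_bdd : BddBelow (lap u '' O))
    (h_lap : ∀ x ∈ O, v x < u x → u x * lap v x ≤ v x * lap u x)
    (h_mass : ∫ x in O, u x ^ 2 ≤ ∫ x in O, v x ^ 2) :
    ∀ x ∈ O, u x ≤ v x := by
  rcases forall_le_or_forall_lt_of_mul_lap_le hO hO_bdd hO_conn hu_cont hu hv_cont hv hv_pos h_bd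
    h_bdd h_lap with h_le | h_lt
  · exact h_le
  · intro x hx
    have h_int {f : EuclideanSpace ℝ (Fin d) → ℝ} (hf : ContinuousOn f (closure O)) :
        IntegrableOn (fun x => f x ^ 2) O :=
      ((hf.pow 2).integrableOn_compact hO_bdd.isCompact_closure).mono_set subset_closure
    exact absurd h_mass (setIntegral_lt_setIntegral_of_forall_lt hO.measurableSet
      (hO.measure_ne_zero volume ⟨x, hx⟩) (h_int hv_cont) (h_int hu_cont) fun y hy =>
        pow_lt_pow_left₀ (h_lt y hy) (hv_pos y hy).le two_ne_zero).not_ge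

theorem bddBelow_lap_image {f : ℝ → ℝ} (hf : ∀ M, BddBelow (f '' Ioc 0 M))
    (hO_bdd : Bornology.IsBounded O) (hu_cont : ContinuousOn u (closure O))
    (hu_eq : ∀ x ∈ O, lap u x = f (u x)) (hu_pos : ∀ x ∈ O, 0 < u x) :
    BddBelow (lap u '' O) := by
  obtain ⟨M, hM⟩ := hO_bdd.isCompact_closure.bddAbove_image hu_cont
  refine (hf M).mono ?_
  rintro _ ⟨x, hx, rfl⟩
  exact ⟨u x, ⟨hu_pos x hx, hM (mem_image_of_mem u (subset_closure hx))⟩, (hu_eq x hx).symm⟩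

end Comparison

theorem monotoneOn_rpow_sub_one_sub_mul_div {p : ℝ} (hp : 2 ≤ p) (lam : ℝ) :
    MonotoneOn (fun s : ℝ => (s ^ (p - 1) - lam * s) / s) (Ioi 0) := by
  have h_eq : ∀ s ∈ Ioi (0 : ℝ), s ^ (p - 2) - lam = (s ^ (p - 1) - lam * s) / s := by
    intro s (hs : 0 < s)
    rw [sub_div, mul_div_cancel_right₀ _ hs.ne', ← Real.rpow_sub_one hs.ne']
    ring_nf
  refine MonotoneOn.congr (fun s hs t _ hst => ?_) h_eq
  exact sub_le_sub_right (Real.rpow_le_rpow (mem_Ioi.mp hs).le hst (sub_nonneg.mpr hp)) lam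

theorem bddBelow_rpow_sub_mul_image_Ioc (q lam M : ℝ) :
    BddBelow ((fun s : ℝ => s ^ q - lam * s) '' Ioc 0 M) := by
  refine ⟨-(|lam| * M), ?_⟩
  rintro _ ⟨s, ⟨hs_pos, hs_le⟩, rfl⟩
  have h_pow : 0 ≤ s ^ q := Real.rpow_nonneg hs_pos.le q
  have h_lin : lam * s ≤ |lam| * M :=
    mul_le_mul (le_abs_self lam) hs_le hs_pos.le (abs_nonneg lam)
  linarith

theorem uniqueness_of_positive_stationary_solution_general {d : ℕ}
    {O : Set (EuclideanSpace ℝ (Fin d))} (hO : IsOpen O) (hO_bdd : Bornology.IsBounded O)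
    (hO_conn : IsPreconnected O) {f : ℝ → ℝ} (hf_mono : MonotoneOn (fun s => f s / s) (Ioi 0))
    (hf_bdd : ∀ M, BddBelow (f '' Ioc 0 M)) {u₁ u₂ : EuclideanSpace ℝ (Fin d) → ℝ}
    (h₁cont : ContinuousOn u₁ (closure O)) (h₁C2 : ContDiffOn ℝ 2 u₁ O)
    (h₂cont : ContinuousOn u₂ (closure O)) (h₂C2 : ContDiffOn ℝ 2 u₂ O)
    (h₁eq : ∀ x ∈ O, lap u₁ x = f (u₁ x)) (h₂eq : ∀ x ∈ O, lap u₂ x = f (u₂ x))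
    (h₁pos : ∀ x ∈ O, 0 < u₁ x) (h₂pos : ∀ x ∈ O, 0 < u₂ x)
    (h_bd : EqOn u₁ u₂ (frontier O))
    (h_mass : ∫ x in O, u₁ x ^ 2 = ∫ x in O, u₂ x ^ 2) :
    EqOn u₁ u₂ (closure O) := by
  have h_cmp {s t : ℝ} (ht : 0 < t) (hts : t < s) : s * f t ≤ t * f s := by
    have h := hf_mono ht (ht.trans hts) hts.le
    rwa [div_le_div_iff₀ ht (ht.trans hts), mul_comm, mul_comm (f s)] at h
  have h_le : ∀ x ∈ O, u₁ x ≤ u₂ x :=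
    le_of_mul_lap_le_of_setIntegral_sq_le hO hO_bdd hO_conn h₁cont h₁C2 h₂cont h₂C2 h₂pos
      (fun x hx => (h_bd hx).le) (bddBelow_lap_image hf_bdd hO_bdd h₁cont h₁eq h₁pos)
      (fun x hx hlt => by simpa only [h₁eq x hx, h₂eq x hx] using h_cmp (h₂pos x hx) hlt)
      h_mass.le
  have h_ge : ∀ x ∈ O, u₂ x ≤ u₁ x :=
    le_of_mul_lap_le_of_setIntegral_sq_le hO hO_bdd hO_conn h₂cont h₂C2 h₁cont h₁C2 h₁pos
      (fun x hx => (h_bd hx).ge) (bddBelow_lap_image hf_bdd hO_bdd h₂cont h₂eq h₂pos)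
      (fun x hx hlt => by simpa only [h₁eq x hx, h₂eq x hx] using h_cmp (h₁pos x hx) hlt)
      h_mass.ge
  rw [closure_eq_self_union_frontier]
  exact EqOn.union (fun x hx => (h_le x hx).antisymm (h_ge x hx)) h_bd

/-- Let `O ⊆ ℝ^d` be a bounded, connected, open set with `C²` boundary,
`p ≥ 2` and `λ > 0`. If `u₁, u₂` are continuous on `closure O`, `C²` on `O`, and each
satisfies `Δu − u^{p−1} + λu = 0` and `u > 0` in `O`, `u = 0` on `∂O`, and
`∫_O u² = 1`, then `u₁ = u₂` on `closure O`. -/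
theorem uniqueness_of_positive_stationary_solution (d : ℕ)
    (O : Set (EuclideanSpace ℝ (Fin d))) (hO : IsOpen O)
    (hObdd : Bornology.IsBounded O) (hOconn : IsConnected O) (hOC2 : IsC2Boundary O)
    (p : ℝ) (hp : 2 ≤ p) (lam : ℝ) (hlam : 0 < lam)
    (u₁ u₂ : EuclideanSpace ℝ (Fin d) → ℝ)
    (h₁cont : ContinuousOn u₁ (closure O)) (h₁C2 : ContDiffOn ℝ 2 u₁ O)
    (h₂cont : ContinuousOn u₂ (closure O)) (h₂C2 : ContDiffOn ℝ 2 u₂ O)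
    (h₁eq : ∀ x ∈ O, lap u₁ x - u₁ x ^ (p - 1) + lam * u₁ x = 0)
    (h₂eq : ∀ x ∈ O, lap u₂ x - u₂ x ^ (p - 1) + lam * u₂ x = 0)
    (h₁pos : ∀ x ∈ O, 0 < u₁ x) (h₂pos : ∀ x ∈ O, 0 < u₂ x)
    (h₁bd : ∀ x ∈ frontier O, u₁ x = 0) (h₂bd : ∀ x ∈ frontier O, u₂ x = 0)
    (h₁mass : ∫ x in O, (u₁ x) ^ 2 = 1) (h₂mass : ∫ x in O, (u₂ x) ^ 2 = 1) :
    Set.EqOn u₁ u₂ (closure O) := by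
  exact uniqueness_of_positive_stationary_solution_general hO hObdd hOconn.isPreconnected
    (monotoneOn_rpow_sub_one_sub_mul_div hp lam) (bddBelow_rpow_sub_mul_image_Ioc (p - 1) lam)
    h₁cont h₁C2 h₂cont h₂C2 (fun x hx => by linarith [h₁eq x hx])
    (fun x hx => by linarith [h₂eq x hx]) h₁pos h₂pos
    (fun x hx => (h₁bd x hx).trans (h₂bd x hx).symm) (h₁mass.trans h₂mass.symm)
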